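/- Let M be an n-manifold. (a) A connected open Hausdorff subset U ⊆ M is CH-maximal if and only if the closure of NH(U) equals (closure of U) − U. (b) If U ⊆ M is H-maximal, then the closure of NH(U) equals (closure of U) − U, which equals M − U. -/

import Mathlib

open Set Topology TopologicalSpace

universe u

/-- Two points are inseparable (`x ⋈ y`): distinct, and every open set containing
one meets every open set containing the other. -/
def Bump {X : Type u} [TopologicalSpace X] (x y : X) : Prop :=
  x ≠ y ∧ ∀ U V : Set X, IsOpen U → IsOpen V → x ∈ U → y ∈ V → (U ∩ V).Nonempty

/-- `NH A` = points inseparable from some point of `A`. -/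
def NH {X : Type u} [TopologicalSpace X] (A : Set X) : Set X :=
  {y | ∃ x ∈ A, Bump y x}

/-- `NHpt x = NH {x}`. -/
def NHpt {X : Type u} [TopologicalSpace X] (x : X) : Set X := NH {x}

/-- An Euclidean subset: open and homeomorphic to ℝⁿ. -/
def IsEuclidean {X : Type u} [TopologicalSpace X] (n : ℕ) (U : Set X) : Prop :=
  IsOpen U ∧ Nonempty (U ≃ₜ EuclideanSpace ℝ (Fin n))

/-- An `n`-manifold: nonempty connected space, every point has an open
neighborhood homeomorphic to ℝⁿ (Hausdorffness NOT assumed). -/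
def IsNManifold (X : Type u) [TopologicalSpace X] (n : ℕ) : Prop :=
  ConnectedSpace X ∧ ∀ x : X, ∃ U : Set X, x ∈ U ∧ IsEuclidean n U

/-- Locally Hausdorff space. -/
def LocallyHausdorff (X : Type u) [TopologicalSpace X] : Prop :=
  ∀ x : X, ∃ U : Set X, IsOpen U ∧ x ∈ U ∧ T2Space U

/-- Quasi-countably-compact subset: every countable open cover has a finite subcover. -/
def QuasiCountablyCompact {X : Type u} [TopologicalSpace X] (K : Set X) : Prop :=
  ∀ U : ℕ → Set X, (∀ n, IsOpen (U n)) → K ⊆ ⋃ n, U n →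
    ∃ s : Finset ℕ, K ⊆ ⋃ n ∈ s, U n

/-- `A` is `κ`-Baire in `X`: not covered by fewer than `κ` nowhere dense sets. -/
def KappaBaire {X : Type u} [TopologicalSpace X] (κ : Cardinal.{u}) (A : Set X) : Prop :=
  ∀ (ι : Type u) (F : ι → Set X), Cardinal.mk ι < κ →
    (∀ i, IsNowhereDense (F i)) → ¬ A ⊆ ⋃ i, F i

/-- `S` is a scan of `A` in `X`. -/
def IsScan {X : Type u} [TopologicalSpace X] (S A : Set X) : Prop :=
  S ⊆ NH A ∧ ∀ x ∈ A, ((NHpt x).Nonempty ↔ (NHpt x ∩ S).Nonempty)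

/-- `U` is sorted: a continuous map from `closure U` to a Hausdorff space,
injective on `U`. -/
def IsSorted {X : Type u} [TopologicalSpace X] (U : Set X) : Prop :=
  ∃ (H : Type u) (tH : TopologicalSpace H) (f : closure U → H),
    @T2Space H tH ∧ @Continuous _ H _ tH f ∧
      ∀ a b : closure U, (a : X) ∈ U → (b : X) ∈ U → f a = f b → a = b

/-- `U` is weakly sorted: a continuous map from `closure U` to a Hausdorff space,
finite-to-one on `U`. -/
def IsWeaklySorted {X : Type u} [TopologicalSpace X] (U : Set X) : Prop :=
  ∃ (H : Type u) (tH : TopologicalSpace H) (f : closure U → H),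
    @T2Space H tH ∧ @Continuous _ H _ tH f ∧
      ∀ h : H, {a : closure U | (a : X) ∈ U ∧ f a = h}.Finite

/-- H-maximal: open Hausdorff, with no open Hausdorff proper superset. -/
def IsHMaximal {X : Type u} [TopologicalSpace X] (U : Set X) : Prop :=
  IsOpen U ∧ T2Space U ∧
    ∀ V : Set X, IsOpen V → T2Space V → U ⊆ V → V = U

/-- CH-maximal: connected open Hausdorff, with no connected open Hausdorff
proper superset. -/
def IsCHMaximal {X : Type u} [TopologicalSpace X] (U : Set X) : Prop :=
  IsConnected U ∧ IsOpen U ∧ T2Space U ∧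
    ∀ V : Set X, IsConnected V → IsOpen V → T2Space V → U ⊆ V → V = U

/-- `U` is f-simple at `p`: every open `V ∋ p` contains an open `W ∋ p` such that
`W ∩ U` has finitely many connected components. -/
def FSimpleAt {X : Type u} [TopologicalSpace X] (U : Set X) (p : X) : Prop :=
  ∀ V : Set X, IsOpen V → p ∈ V → ∃ W : Set X, IsOpen W ∧ p ∈ W ∧ W ⊆ V ∧
    {C : Set X | ∃ z ∈ W ∩ U, C = connectedComponentIn (W ∩ U) z}.Finite

/-- f-rim-simple: f-simple at every boundary point. -/
def FRimSimple {X : Type u} [TopologicalSpace X] (U : Set X) : Prop :=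
  ∀ p ∈ closure U \ U, FSimpleAt U p

/-- cov(ℳ): least cardinality of a family of nowhere dense subsets of ℝ covering ℝ. -/
noncomputable def covMeager : Cardinal :=
  sInf {c : Cardinal | ∃ (ι : Type) (F : ι → Set ℝ),
    Cardinal.mk ι = c ∧ (∀ i, IsNowhereDense (F i)) ∧ ⋃ i, F i = Set.univ}

/-- A locally compact first countable S-space: Hausdorff, regular, locally compact,
first countable, hereditarily separable, not Lindelöf. -/
def IsLCFCSSpace (S : Type) [TopologicalSpace S] : Prop :=
  T2Space S ∧ RegularSpace S ∧ LocallyCompactSpace S ∧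
    FirstCountableTopology S ∧ (∀ A : Set S, SeparableSpace A) ∧ ¬ LindelofSpace S

theorem t2_iff_aux {X : Type u} [TopologicalSpace X] {V : Set X} (hV : IsOpen V) :
    T2Space V ↔ ∀ x ∈ V, ∀ y ∈ V, ¬ Bump x y := by
  constructor
  · intro h x hx y hy hb
    have hne : (⟨x, hx⟩ : V) ≠ ⟨y, hy⟩ := fun h => hb.1 (congrArg Subtype.val h)
    obtain ⟨A, B, hA, hB, hxA, hyB, hd⟩ := t2_separation hne
    obtain ⟨z, hz1, hz2⟩ := hb.2 (Subtype.val '' A) (Subtype.val '' B)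
      (hV.isOpenMap_subtype_val _ hA) (hV.isOpenMap_subtype_val _ hB)
      ⟨_, hxA, rfl⟩ ⟨_, hyB, rfl⟩
    obtain ⟨a, ha, rfl⟩ := hz1
    obtain ⟨b, hb', hab⟩ := hz2
    have : b = a := Subtype.ext hab
    subst this
    exact Set.disjoint_left.1 hd ha hb'
  · intro h
    refine ⟨fun x y hne => ?_⟩
    have h1 := h x x.2 y y.2
    unfold Bump at h1
    push Not at h1
    obtain ⟨A, B, hA, hB, hxA, hyB, hd⟩ := h1 (fun h => hne (Subtype.ext h))
    refine ⟨Subtype.val ⁻¹' A, Subtype.val ⁻¹' B, hA.preimage continuous_subtype_val,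
      hB.preimage continuous_subtype_val, hxA, hyB, ?_⟩
    rw [Set.disjoint_left]
    intro z hz1 hz2
    have : (z : X) ∈ A ∩ B := ⟨hz1, hz2⟩
    rw [hd] at this
    exact this

theorem Bump_symm_aux {X : Type u} [TopologicalSpace X] {x y : X} (h : Bump x y) : Bump y x :=
  ⟨h.1.symm, fun A B hA hB hy hx => by
    rw [Set.inter_comm]; exact h.2 B A hB hA hx hy⟩

theorem nbhd_aux {M : Type u} [TopologicalSpace M] {n : ℕ} (hM : IsNManifold M n)
    (p : M) (N : Set M) (hN : IsOpen N) (hp : p ∈ N) :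
    ∃ W ⊆ N, IsOpen W ∧ p ∈ W ∧ IsConnected W ∧ T2Space W := by
  obtain ⟨E, hpE, hE, ⟨e⟩⟩ := hM.2 p
  have hT : T2Space E := e.symm.t2Space
  have ho : IsOpen (e.symm ⁻¹' (Subtype.val ⁻¹' N)) :=
    (hN.preimage continuous_subtype_val).preimage e.symm.continuous
  obtain ⟨r, hr, hb⟩ := Metric.isOpen_iff.1 ho (e ⟨p, hpE⟩) (by simpa using hp)
  have hW : IsOpen ((fun z => ((e.symm z : E) : M)) '' Metric.ball (e ⟨p, hpE⟩) r) :=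
    (hE.isOpenMap_subtype_val.comp e.symm.isOpenMap) _ Metric.isOpen_ball
  refine ⟨_, ?_, hW, ⟨e ⟨p, hpE⟩, Metric.mem_ball_self hr, by simp⟩, ?_, ?_⟩
  · rintro _ ⟨z, hz, rfl⟩
    exact hb hz
  · exact (Metric.isConnected_ball hr).image _
      (continuous_subtype_val.comp e.symm.continuous).continuousOn
  · rw [t2_iff_aux hW]
    rintro _ ⟨z, hz, rfl⟩ _ ⟨w, hw, rfl⟩
    exact (t2_iff_aux hE).1 hT _ (e.symm z).2 _ (e.symm w).2

theorem union_aux {X : Type u} [TopologicalSpace X] {U W : Set X} (hU : IsOpen U)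
    (hUT : T2Space U) (hW : IsOpen W) (hWT : T2Space W) (hd : W ⊆ (closure (NH U))ᶜ) :
    T2Space ↥(U ∪ W) := by
  rw [t2_iff_aux (hU.union hW)]
  rintro x (hx | hx) y (hy | hy) hb
  · exact (t2_iff_aux hU).1 hUT x hx y hy hb
  · exact hd hy (subset_closure ⟨x, hx, Bump_symm_aux hb⟩)
  · exact hd hx (subset_closure ⟨y, hy, hb⟩)
  · exact (t2_iff_aux hW).1 hWT x hx y hy hb

theorem NH_sub_aux {X : Type u} [TopologicalSpace X] {U : Set X} (hU : IsOpen U)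
    (hUT : T2Space U) : closure (NH U) ⊆ closure U \ U := by
  have hc : IsClosed (closure U \ U) := by
    rw [diff_eq]; exact isClosed_closure.inter hU.isClosed_compl
  refine closure_minimal ?_ hc
  rintro y ⟨x, hx, hb⟩
  refine ⟨?_, fun hy => (t2_iff_aux hU).1 hUT y hy x hx hb⟩
  rw [mem_closure_iff]
  intro o ho hyo
  exact hb.2 o U ho hU hyo hx

/-- (a) A connected open Hausdorff `U` is CH-maximal iff
`closure (NH U) = closure U − U`.  (b) If `U` is H-maximal then
`closure (NH U) = closure U − U = M − U`. -/
theorem stmt4 {M : Type u} [TopologicalSpace M] (n : ℕ) (hM : IsNManifold M n) :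
    (∀ U : Set M, IsConnected U → IsOpen U → T2Space U →
      (IsCHMaximal U ↔ closure (NH U) = closure U \ U)) ∧
    (∀ U : Set M, IsHMaximal U →
      closure (NH U) = closure U \ U ∧ closure U \ U = Set.univ \ U) := by
  refine ⟨fun U hUc hU hUT => ⟨fun hmax => ?_, fun heq => ?_⟩, fun U hmax => ?_⟩
  · refine Subset.antisymm (NH_sub_aux hU hUT) ?_
    rintro p ⟨hp, hpU⟩
    by_contra hn
    obtain ⟨W, hWN, hW, hpW, hWc, hWT⟩ := nbhd_aux hM p _ isClosed_closure.isOpen_compl hn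
    have hmeet : (U ∩ W).Nonempty := by
      rw [inter_comm]; exact mem_closure_iff.1 hp W hW hpW
    have := hmax.2.2.2 (U ∪ W) (hUc.union hmeet hWc) (hU.union hW)
      (union_aux hU hUT hW hWT hWN) subset_union_left
    exact hpU (this ▸ Or.inr hpW)
  · refine ⟨hUc, hU, hUT, fun V hVc hV hVT hUV => ?_⟩
    by_contra hne
    have hmeet : (V ∩ (closure U \ U)).Nonempty := by
      by_contra hem
      rw [not_nonempty_iff_eq_empty] at hem
      have hcov : V ⊆ U ∪ (closure U)ᶜ := by
        intro v hv
        by_contra hc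
        have : v ∈ V ∩ (closure U \ U) := by
          simp only [mem_union, mem_compl_iff, not_or, not_not] at hc
          exact ⟨hv, hc.2, hc.1⟩
        rw [hem] at this
        exact this
      obtain ⟨q, hqV, hqU⟩ : ∃ q ∈ V, q ∉ U := by
        by_contra hc
        push Not at hc
        exact hne (Subset.antisymm hc hUV)
      obtain ⟨u, hu⟩ := hUc.nonempty
      obtain ⟨z, -, hz1, hz2⟩ := hVc.isPreconnected U (closure U)ᶜ hU
        isClosed_closure.isOpen_compl hcov ⟨u, hUV hu, hu⟩
        ⟨q, hqV, (hcov hqV).resolve_left hqU⟩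
      exact hz2 (subset_closure hz1)
    rw [← heq] at hmeet
    obtain ⟨z, hzV, hz⟩ := hmeet
    obtain ⟨y, hyV, x, hx, hb⟩ := mem_closure_iff.1 hz V hV hzV
    exact (t2_iff_aux hV).1 hVT y hyV x (hUV hx) hb
  · obtain ⟨hU, hUT, hm⟩ := hmax
    have h1 := NH_sub_aux hU hUT
    have h2 : closure U \ U ⊆ univ \ U := diff_subset_diff_left (subset_univ _)
    have h3 : univ \ U ⊆ closure (NH U) := by
      rintro p ⟨-, hpU⟩
      by_contra hn
      obtain ⟨W, hWN, hW, hpW, hWc, hWT⟩ := nbhd_aux hM p _ isClosed_closure.isOpen_compl hn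
      have := hm (U ∪ W) (hU.union hW) (union_aux hU hUT hW hWT hWN) subset_union_left
      exact hpU (this ▸ Or.inr hpW)
    exact ⟨h1.antisymm (h2.trans h3), h2.antisymm (h3.trans h1)⟩
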